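/- arXiv:2603.02405 — 9 statements merged into one kernel-verified Lean document; each statement's English description precedes it below -/
import Mathlib

section
/- Let S' be a loop-free and reward-free pGCL program and b : States → Bool a guard. Then for every expectation X, wp[while(b){reward(1); S'}](X) = ert[while(b){S'}](X); in particular, prepending a unit reward to the loop body makes wp compute the expected run-time (number of loop iterations) of the loop. -/
open ENNReal

/-- Program states: maps from variables to extended non-negative reals. -/
abbrev PState (V : Type) := V → ℝ≥0∞

/-- Expectations: maps from states to extended non-negative reals. -/
abbrev Expct (V : Type) := PState V → ℝ≥0∞

/-- Syntax of pGCL programs. -/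
inductive pGCL (V : Type) : Type 1
  | skip : pGCL V
  | assign : V → Expct V → pGCL V
  | reward : Expct V → pGCL V
  | seq : pGCL V → pGCL V → pGCL V
  | prob : (p : ℝ≥0∞) → p ≤ 1 → pGCL V → pGCL V → pGCL V
  | ifte : (PState V → Bool) → pGCL V → pGCL V → pGCL V
  | loop : (PState V → Bool) → pGCL V → pGCL V

variable {V : Type} [DecidableEq V]

/-- The weakest pre-expectation transformer, bundled as an order hom. -/
noncomputable def wpHom : pGCL V → (Expct V →o Expct V)
  | .skip => OrderHom.id
  | .assign x e => ⟨fun X σ => X (Function.update σ x (e σ)), fun _ _ h σ => h _⟩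
  | .reward e => ⟨fun X σ => e σ + X σ, fun _ _ h σ => add_le_add le_rfl (h σ)⟩
  | .seq S₁ S₂ => (wpHom S₁).comp (wpHom S₂)
  | .prob p _ S₁ S₂ =>
      ⟨fun X σ => p * wpHom S₁ X σ + (1 - p) * wpHom S₂ X σ, by
        intro X Y h σ
        exact add_le_add (mul_le_mul' le_rfl ((wpHom S₁).monotone h σ))
          (mul_le_mul' le_rfl ((wpHom S₂).monotone h σ))⟩
  | .ifte b S₁ S₂ =>
      ⟨fun X σ => if b σ then wpHom S₁ X σ else wpHom S₂ X σ, by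
        intro X Y h σ
        dsimp only
        split
        · exact (wpHom S₁).monotone h σ
        · exact (wpHom S₂).monotone h σ⟩
  | .loop b S =>
      ⟨fun X => OrderHom.lfp
        ⟨fun Y σ => if b σ then wpHom S Y σ else X σ, by
          intro Y₁ Y₂ h σ
          dsimp only
          split
          · exact (wpHom S).monotone h σ
          · exact le_rfl⟩, by
        intro X₁ X₂ h
        apply OrderHom.lfp_le
        have := OrderHom.map_lfp
          (⟨fun Y σ => if b σ then wpHom S Y σ else X₂ σ, by
            intro Y₁ Y₂ h σ
            dsimp only
            split
            · exact (wpHom S).monotone h σ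
            · exact le_rfl⟩ : Expct V →o Expct V)
        refine le_trans (fun σ => ?_) (le_of_eq this)
        have hle : ∀ a : ℝ≥0∞, (if b σ then a else X₁ σ) ≤ (if b σ then a else X₂ σ) := by
          intro a
          split
          · exact le_rfl
          · exact h σ
        exact hle _⟩

/-- The weakest pre-expectation `wp[S](X)`. -/
noncomputable def wp (S : pGCL V) (X : Expct V) : Expct V := wpHom S X

/-- An expression does not depend on variable `τ`. -/
def UnusedE (τ : V) (e : Expct V) : Prop := ∀ σ v, e (Function.update σ τ v) = e σ

/-- A Boolean guard does not depend on variable `τ`. -/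
def UnusedB (τ : V) (b : PState V → Bool) : Prop := ∀ σ v, b (Function.update σ τ v) = b σ

/-- Variable `τ` does not occur in the program `S`. -/
def NotOccurs (τ : V) : pGCL V → Prop
  | .skip => True
  | .assign x e => x ≠ τ ∧ UnusedE τ e
  | .reward e => UnusedE τ e
  | .seq S₁ S₂ => NotOccurs τ S₁ ∧ NotOccurs τ S₂
  | .prob _ _ S₁ S₂ => NotOccurs τ S₁ ∧ NotOccurs τ S₂
  | .ifte b S₁ S₂ => UnusedB τ b ∧ NotOccurs τ S₁ ∧ NotOccurs τ S₂
  | .loop b S => UnusedB τ b ∧ NotOccurs τ S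

/-- Auxiliary reward transformation `T'_f` with ghost variable `τ`:
replaces `reward(e)` by `reward(f(τ+e) − f(τ)); τ := τ + e`. -/
noncomputable def Taux (τ : V) (f : ℝ≥0∞ → ℝ≥0∞) : pGCL V → pGCL V
  | .reward e =>
      .seq (.reward fun σ => f (σ τ + e σ) - f (σ τ)) (.assign τ (fun σ => σ τ + e σ))
  | .seq S₁ S₂ => .seq (Taux τ f S₁) (Taux τ f S₂)
  | .prob p hp S₁ S₂ => .prob p hp (Taux τ f S₁) (Taux τ f S₂)
  | .ifte b S₁ S₂ => .ifte b (Taux τ f S₁) (Taux τ f S₂)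
  | .loop b S => .loop b (Taux τ f S)
  | .skip => .skip
  | .assign x e => .assign x e

/-- Full reward transformation `T_f(S) = τ := 0; reward(f(0)); T'_f(S)`. -/
noncomputable def Tfull (τ : V) (f : ℝ≥0∞ → ℝ≥0∞) (S : pGCL V) : pGCL V :=
  .seq (.assign τ (fun _ => 0)) (.seq (.reward fun _ => f 0) (Taux τ f S))

/-- A program contains no reward statement. -/
def RewardFree : pGCL V → Prop
  | .skip => True
  | .assign _ _ => True
  | .reward _ => False
  | .seq S₁ S₂ => RewardFree S₁ ∧ RewardFree S₂
  | .prob _ _ S₁ S₂ => RewardFree S₁ ∧ RewardFree S₂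
  | .ifte _ S₁ S₂ => RewardFree S₁ ∧ RewardFree S₂
  | .loop _ S => RewardFree S

/-- A program contains no while loop. -/
def LoopFree : pGCL V → Prop
  | .skip => True
  | .assign _ _ => True
  | .reward _ => True
  | .seq S₁ S₂ => LoopFree S₁ ∧ LoopFree S₂
  | .prob _ _ S₁ S₂ => LoopFree S₁ ∧ LoopFree S₂
  | .ifte _ S₁ S₂ => LoopFree S₁ ∧ LoopFree S₂
  | .loop _ _ => False

/-- The expected run-time transformer `ert`: same clauses as `wp`, except that
while loops count one unit of run-time per iteration. -/
noncomputable def ertHom : pGCL V → (Expct V →o Expct V)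
  | .skip => OrderHom.id
  | .assign x e => ⟨fun X σ => X (Function.update σ x (e σ)), fun _ _ h σ => h _⟩
  | .reward e => ⟨fun X σ => e σ + X σ, fun _ _ h σ => add_le_add le_rfl (h σ)⟩
  | .seq S₁ S₂ => (ertHom S₁).comp (ertHom S₂)
  | .prob p _ S₁ S₂ =>
      ⟨fun X σ => p * ertHom S₁ X σ + (1 - p) * ertHom S₂ X σ, by
        intro X Y h σ
        exact add_le_add (mul_le_mul' le_rfl ((ertHom S₁).monotone h σ))
          (mul_le_mul' le_rfl ((ertHom S₂).monotone h σ))⟩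
  | .ifte b S₁ S₂ =>
      ⟨fun X σ => if b σ then ertHom S₁ X σ else ertHom S₂ X σ, by
        intro X Y h σ
        dsimp only
        split
        · exact (ertHom S₁).monotone h σ
        · exact (ertHom S₂).monotone h σ⟩
  | .loop b S =>
      ⟨fun X => OrderHom.lfp
        ⟨fun Y σ => if b σ then 1 + ertHom S Y σ else X σ, by
          intro Y₁ Y₂ h σ
          dsimp only
          split
          · exact add_le_add le_rfl ((ertHom S).monotone h σ)
          · exact le_rfl⟩, by
        intro X₁ X₂ h
        apply OrderHom.lfp_le
        have := OrderHom.map_lfp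
          (⟨fun Y σ => if b σ then 1 + ertHom S Y σ else X₂ σ, by
            intro Y₁ Y₂ h σ
            dsimp only
            split
            · exact add_le_add le_rfl ((ertHom S).monotone h σ)
            · exact le_rfl⟩ : Expct V →o Expct V)
        refine le_trans (fun σ => ?_) (le_of_eq this)
        have hle : ∀ a : ℝ≥0∞, (if b σ then a else X₁ σ) ≤ (if b σ then a else X₂ σ) := by
          intro a
          split
          · exact le_rfl
          · exact h σ
        exact hle _⟩

/-- The expected run-time `ert[S](X)`. -/
noncomputable def ert (S : pGCL V) (X : Expct V) : Expct V := ertHom S X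

theorem wpHom_eq_ertHom (S : pGCL V) (h : LoopFree S) : wpHom S = ertHom S := by
  induction S with
  | skip => rfl
  | assign x e => rfl
  | reward e => rfl
  | seq S₁ S₂ ih₁ ih₂ => simp only [wpHom, ertHom, ih₁ h.1, ih₂ h.2]
  | prob p hp S₁ S₂ ih₁ ih₂ => simp only [wpHom, ertHom, ih₁ h.1, ih₂ h.2]
  | ifte b S₁ S₂ ih₁ ih₂ => simp only [wpHom, ertHom, ih₁ h.1, ih₂ h.2]
  | loop b S ih => exact h.elim

/-- Incremental runtime collection: for loop-free and reward-free `S'`,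
`wp[while(b){reward(1); S'}](X) = ert[while(b){S'}](X)`. -/
theorem wp_reward_loop_eq_ert (b : PState V → Bool) (S' : pGCL V)
    (hloopfree : LoopFree S') (hrewfree : RewardFree S') (X : Expct V) :
    wp (.loop b (.seq (.reward fun _ => 1) S')) X = ert (.loop b S') X := by
  have h := wpHom_eq_ertHom S' hloopfree
  simp only [wp, ert, wpHom, ertHom, h]
  rfl
end

section
/- (Path correspondence for the Markov chain reward transformation.) Let M = (S, Prob, σ₁, rew) be a Markov chain and f : ℝ≥0∞ → ℝ≥0∞ monotone with f(0) = 0. For every n ∈ ℕ, the map ξₙ sending a path σ₁…σₙ of M to the sequence (σ₁,α₁)…(σₙ,αₙ), where αᵢ = Σ_{j<i} rew(σⱼ), is a well-defined bijection from Paths^{=n}(M) to Paths^{=n}(T_f(M)) such that: (1) path probabilities are preserved, Prob(σ₁…σₙ) = Prob'(ξₙ(σ₁…σₙ)); (2) the second components track the previous untransformed rewards, αᵢ = Σ_{j<i} rew(σⱼ) for all 1 ≤ i ≤ n; and (3) rewards are transformed, f(rew(σ₁…σₙ)) = rew'(ξₙ(σ₁…σₙ)). -/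
open ENNReal

/-- A Markov chain with rewards: a transition function into probability mass
functions, an initial state, and a reward function. -/
structure MC (S : Type*) where
  P : S → PMF S
  init : S
  rew : S → ℝ≥0∞

namespace MC

variable {S : Type*}

/-- `l` is a path of length `n` of the Markov chain `M`: it starts at the
initial state and all one-step transition probabilities are positive. -/
def IsPath (M : MC S) (n : ℕ) (l : List S) : Prop :=
  l.length = n ∧ l.head? = some M.init ∧ l.Chain' (fun s s' => 0 < M.P s s')

/-- The probability of a path: the product of its transition probabilities. -/
noncomputable def pathProb (M : MC S) : List S → ℝ≥0∞
  | [] => 1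
  | [_] => 1
  | s :: s' :: r => M.P s s' * M.pathProb (s' :: r)

/-- The cumulative reward of a path: the sum of its state rewards. -/
noncomputable def pathRew (M : MC S) (l : List S) : ℝ≥0∞ := (l.map M.rew).sum

/-- The expected `g`-transformed cumulative reward of `M`:
`E(g(Rew M)) = sup_n Σ_{π ∈ Paths^{=n}(M)} Prob(π) · g(Rew(π))`. -/
noncomputable def expRew (M : MC S) (g : ℝ≥0∞ → ℝ≥0∞) : ℝ≥0∞ :=
  ⨆ n : ℕ, ∑' l : {l : List S // M.IsPath n l}, M.pathProb l.1 * g (M.pathRew l.1)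

/-- The reward-transformed Markov chain `T_f(M)`: the state space is augmented
with the accumulated reward of the original chain, and the new rewards are the
incremental differences `f(α + rew(σ)) − f(α)`. -/
noncomputable def transform (M : MC S) (f : ℝ≥0∞ → ℝ≥0∞) : MC (S × ℝ≥0∞) where
  P := fun c => (M.P c.1).map (fun s' => (s', c.2 + M.rew c.1))
  init := (M.init, 0)
  rew := fun c => f (c.2 + M.rew c.1) - f c.2

end MC

/-- The path correspondence map `ξ`: it sends `σ₁…σₙ` to
`(σ₁,α₁)…(σₙ,αₙ)` where `αᵢ = Σ_{j<i} rew(σⱼ)`. -/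
noncomputable def xi {S : Type*} (rew : S → ℝ≥0∞) (l : List S) : List (S × ℝ≥0∞) :=
  l.zip (l.scanl (fun a s => a + rew s) 0)

lemma xi_aux_P {S : Type*} (M : MC S) (f : ℝ≥0∞ → ℝ≥0∞) (s : S) (a : ℝ≥0∞) (s' : S) :
    (M.transform f).P (s, a) (s', a + M.rew s) = M.P s s' := by
  classical
  simp only [MC.transform, PMF.map_apply]
  rw [tsum_eq_single s']
  · simp
  · intro b hb
    rw [if_neg]
    intro h
    exact hb (Prod.ext_iff.1 h).1.symm

lemma xi_aux_P_pos {S : Type*} (M : MC S) (f : ℝ≥0∞ → ℝ≥0∞) (s : S) (a : ℝ≥0∞) (s' : S)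
    (b : ℝ≥0∞) (h : 0 < (M.transform f).P (s, a) (s', b)) : b = a + M.rew s := by
  have h1 := (PMF.mem_support_iff _ _).2 h.ne'
  simp only [MC.transform, PMF.mem_support_map_iff] at h1
  obtain ⟨c, -, hc⟩ := h1
  exact (Prod.ext_iff.1 hc).2.symm

/-- Generalised correspondence map with a starting accumulator. -/
noncomputable def xiAux {S : Type*} (rew : S → ℝ≥0∞) : ℝ≥0∞ → List S → List (S × ℝ≥0∞)
  | _, [] => []
  | a, s :: l => (s, a) :: xiAux rew (a + rew s) l

lemma xi_eq_aux {S : Type*} (rew : S → ℝ≥0∞) (l : List S) : xi rew l = xiAux rew 0 l := by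
  have : ∀ (l : List S) (a : ℝ≥0∞),
      l.zip (l.scanl (fun a s => a + rew s) a) = xiAux rew a l := by
    intro l
    induction l with
    | nil => intro a; simp [xiAux]
    | cons s l ih => intro a; simp [xiAux, List.scanl_cons, ih]
  exact this l 0

lemma xiAux_fst {S : Type*} (rew : S → ℝ≥0∞) (l : List S) (a : ℝ≥0∞) :
    (xiAux rew a l).map Prod.fst = l := by
  induction l generalizing a with
  | nil => rfl
  | cons s l ih => simp [xiAux, ih]

lemma xiAux_chain {S : Type*} (M : MC S) (f : ℝ≥0∞ → ℝ≥0∞) (l : List S) (a : ℝ≥0∞) :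
    (xiAux M.rew a l).IsChain (fun s s' => 0 < (M.transform f).P s s') ↔
      l.IsChain (fun s s' => 0 < M.P s s') := by
  induction l generalizing a with
  | nil => simp [xiAux]
  | cons s l ih =>
    cases l with
    | nil => simp [xiAux]
    | cons t l =>
      have := ih (a + M.rew s)
      simp only [xiAux] at this ⊢
      rw [List.isChain_cons_cons, List.isChain_cons_cons, this, xi_aux_P]

lemma xiAux_prob {S : Type*} (M : MC S) (f : ℝ≥0∞ → ℝ≥0∞) (l : List S) (a : ℝ≥0∞) :
    M.pathProb l = (M.transform f).pathProb (xiAux M.rew a l) := by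
  induction l generalizing a with
  | nil => simp [xiAux, MC.pathProb]
  | cons s l ih =>
    cases l with
    | nil => simp [xiAux, MC.pathProb]
    | cons t l =>
      have := ih (a + M.rew s)
      simp only [xiAux] at this ⊢
      rw [MC.pathProb, MC.pathProb, this, xi_aux_P]

lemma xiAux_rew {S : Type*} (M : MC S) (f : ℝ≥0∞ → ℝ≥0∞) (hf : Monotone f)
    (l : List S) (a : ℝ≥0∞) :
    f (a + M.pathRew l) = f a + (M.transform f).pathRew (xiAux M.rew a l) := by
  induction l generalizing a with
  | nil => simp [xiAux, MC.pathRew]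
  | cons s l ih =>
    have := ih (a + M.rew s)
    simp only [MC.pathRew, xiAux, List.map_cons, List.sum_cons] at this ⊢
    rw [← add_assoc, this, ← add_assoc]
    congr 1
    exact (add_tsub_cancel_of_le (hf le_self_add)).symm

lemma xiAux_get {S : Type*} (rew : S → ℝ≥0∞) (l : List S) (a : ℝ≥0∞) (i : ℕ)
    (h : i < (xiAux rew a l).length) :
    ((xiAux rew a l)[i]).2 = a + ((l.take i).map rew).sum := by
  induction l generalizing a i with
  | nil => simp [xiAux] at h
  | cons s l ih =>
    cases i with
    | zero => simp [xiAux]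
    | succ i =>
      simp only [xiAux, List.length_cons, Nat.add_lt_add_iff_right] at h
      simp [xiAux, ih _ _ h, add_assoc]

lemma xiAux_surj {S : Type*} (M : MC S) (f : ℝ≥0∞ → ℝ≥0∞) (l : List (S × ℝ≥0∞)) (s : S)
    (a : ℝ≥0∞)
    (h : ((s, a) :: l).IsChain (fun s s' => 0 < (M.transform f).P s s')) :
    xiAux M.rew a (((s, a) :: l).map Prod.fst) = (s, a) :: l := by
  induction l generalizing s a with
  | nil => simp [xiAux]
  | cons t l ih =>
    obtain ⟨t, b⟩ := t
    rw [List.isChain_cons_cons] at h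
    obtain rfl := xi_aux_P_pos M f _ _ _ _ h.1
    have := ih _ _ h.2
    rw [List.map_cons, xiAux, this]

lemma xiAux_path {S : Type*} (M : MC S) (f : ℝ≥0∞ → ℝ≥0∞) (n : ℕ) (l : List S) :
    (M.transform f).IsPath n (xiAux M.rew 0 l) ↔ M.IsPath n l := by
  have hl : (xiAux M.rew 0 l).length = l.length := by
    rw [← List.length_map (f := Prod.fst), xiAux_fst]
  unfold MC.IsPath
  rw [hl]
  refine and_congr_right fun _ => and_congr ?_ (xiAux_chain M f l 0)
  cases l <;> simp [xiAux, MC.transform]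

/-- Path correspondence for the Markov chain reward transformation:
for monotone `f` with `f(0) = 0`, the map `ξ` is a bijection from the length-`n`
paths of `M` onto the length-`n` paths of `T_f(M)` which (1) preserves path
probabilities, (2) tracks previous untransformed rewards in the second
components, and (3) transforms cumulative path rewards by `f`. -/
theorem mc_path_correspondence {S : Type*} [Countable S] (M : MC S)
    (f : ℝ≥0∞ → ℝ≥0∞) (hf : Monotone f) (hf0 : f 0 = 0) (n : ℕ) :
    Set.BijOn (xi M.rew) {l | M.IsPath n l} {l | (M.transform f).IsPath n l} ∧
    ∀ l : List S, M.IsPath n l →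
      (M.pathProb l = (M.transform f).pathProb (xi M.rew l)) ∧
      (∀ i (h : i < (xi M.rew l).length),
        ((xi M.rew l).get ⟨i, h⟩).2 = ((l.take i).map M.rew).sum) ∧
      (f (M.pathRew l) = (M.transform f).pathRew (xi M.rew l)) := by
  have hx : xi M.rew = xiAux M.rew 0 := funext (xi_eq_aux M.rew)
  rw [hx]
  refine ⟨⟨fun l hl => (xiAux_path M f n l).2 hl, ?_, ?_⟩, fun l _ => ⟨?_, ?_, ?_⟩⟩
  · intro l _ l' _ h
    rw [← xiAux_fst M.rew l 0, h, xiAux_fst]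
  · intro l hl
    have hl' : (M.transform f).IsPath n l := hl
    have e : xiAux M.rew 0 (l.map Prod.fst) = l := by
      cases l with
      | nil => rfl
      | cons c l =>
        obtain ⟨_, h2, h3⟩ := hl'
        simp only [List.head?_cons, Option.some.injEq] at h2
        subst h2
        exact xiAux_surj M f l _ _ h3
    refine ⟨l.map Prod.fst, ?_, e⟩
    rw [← e] at hl'
    exact (xiAux_path M f n _).1 hl'
  · exact xiAux_prob M f l 0
  · intro i h
    have := xiAux_get M.rew l 0 i h
    rw [zero_add] at this
    exact this
  · have := xiAux_rew M f hf l 0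
    rwa [zero_add, hf0, zero_add] at this
end

section
/- (Soundness of the Markov chain reward transformation.) For every Markov chain M = (S, Prob, σ₁, rew) and every monotone f : ℝ≥0∞ → ℝ≥0∞ with f(0) = 0, the expected f-transformed cumulative reward of M equals the expected cumulative reward of the transformed chain: E(f(Rew M)) = E(Rew' T_f(M)). -/
open ENNReal

namespace MC

variable {S : Type*}

/-- Annotate a list of states with the accumulated reward. -/
noncomputable def lift (M : MC S) : ℝ≥0∞ → List S → List (S × ℝ≥0∞)
  | _, [] => []
  | a, s :: r => (s, a) :: M.lift (a + M.rew s) r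

theorem lift_fst (M : MC S) (l : List S) (a : ℝ≥0∞) : (M.lift a l).map Prod.fst = l := by
  induction l generalizing a with
  | nil => rfl
  | cons s r ih => simp [lift, ih]

theorem transform_P_eq (M : MC S) (f : ℝ≥0∞ → ℝ≥0∞) (s s' : S) (a : ℝ≥0∞) :
    (M.transform f).P (s, a) (s', a + M.rew s) = M.P s s' := by
  classical
  simp only [transform, PMF.map_apply, Prod.mk.injEq, and_true]
  rw [tsum_eq_single s']
  · simp
  · intro b hb
    simp [Ne.symm hb]

theorem transform_P_pos (M : MC S) (f : ℝ≥0∞ → ℝ≥0∞) (c d : S × ℝ≥0∞)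
    (h : 0 < (M.transform f).P c d) : d.2 = c.2 + M.rew c.1 := by
  have h2 : d ∈ ((M.P c.1).map (fun s' => (s', c.2 + M.rew c.1))).support := by
    rw [PMF.mem_support_iff]
    exact h.ne'
  rw [PMF.mem_support_map_iff] at h2
  obtain ⟨x, _, rfl⟩ := h2
  rfl

theorem lift_chain (M : MC S) (f : ℝ≥0∞ → ℝ≥0∞) (l : List S) (a : ℝ≥0∞) :
    (M.lift a l).IsChain (fun s s' => 0 < (M.transform f).P s s') ↔
      l.IsChain (fun s s' => 0 < M.P s s') := by
  induction l generalizing a with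
  | nil => simp [lift]
  | cons s r ih =>
    cases r with
    | nil => simp [lift]
    | cons t r =>
      have := ih (a + M.rew s)
      simp only [lift] at this ⊢
      rw [List.isChain_cons_cons, List.isChain_cons_cons, this, transform_P_eq]

theorem lift_prob (M : MC S) (f : ℝ≥0∞ → ℝ≥0∞) (l : List S) (a : ℝ≥0∞) :
    (M.transform f).pathProb (M.lift a l) = M.pathProb l := by
  induction l generalizing a with
  | nil => simp [lift, pathProb]
  | cons s r ih =>
    cases r with
    | nil => simp [lift, pathProb]
    | cons t r =>
      have := ih (a + M.rew s)
      simp only [lift, pathProb] at this ⊢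
      rw [this, transform_P_eq]

theorem lift_rew (M : MC S) (f : ℝ≥0∞ → ℝ≥0∞) (hf : Monotone f) (l : List S) (a : ℝ≥0∞) :
    f a + (M.transform f).pathRew (M.lift a l) = f (a + M.pathRew l) := by
  induction l generalizing a with
  | nil => simp [lift, pathRew]
  | cons s r ih =>
    have := ih (a + M.rew s)
    simp only [lift, pathRew, List.map_cons, List.sum_cons] at this ⊢
    rw [← add_assoc, ← add_assoc, ← this]
    congr 1
    exact add_tsub_cancel_of_le (hf le_self_add)

theorem eq_lift (M : MC S) (f : ℝ≥0∞ → ℝ≥0∞) (l : List (S × ℝ≥0∞)) (a : ℝ≥0∞)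
    (h0 : ∀ c ∈ l.head?, c.2 = a)
    (h : l.IsChain (fun s s' => 0 < (M.transform f).P s s')) :
    M.lift a (l.map Prod.fst) = l := by
  induction l generalizing a with
  | nil => rfl
  | cons c r ih =>
    obtain ⟨s, b⟩ := c
    obtain rfl : b = a := by simpa using h0
    rw [List.isChain_cons] at h
    simp only [List.map_cons, lift]
    rw [ih _ _ h.2]
    intro d hd
    exact M.transform_P_pos f _ _ (h.1 d hd)

theorem lift_length (M : MC S) (l : List S) (a : ℝ≥0∞) : (M.lift a l).length = l.length := by
  conv_rhs => rw [← M.lift_fst l a, List.length_map]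

/-- Paths of the chain correspond to paths of the transformed chain. -/
noncomputable def pathEquiv (M : MC S) (f : ℝ≥0∞ → ℝ≥0∞) (n : ℕ) :
    {l : List S // M.IsPath n l} ≃ {l : List (S × ℝ≥0∞) // (M.transform f).IsPath n l} where
  toFun l := ⟨M.lift 0 l.1, by
    obtain ⟨l, h1, h2, h3⟩ := l
    refine ⟨by rw [lift_length, h1], ?_, (M.lift_chain f l 0).2 h3⟩
    cases l with
    | nil => simp at h2
    | cons s r => simpa [lift, transform] using h2⟩
  invFun l := ⟨l.1.map Prod.fst, by
    obtain ⟨l, h1, h2, h3⟩ := l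
    have e : M.lift 0 (l.map Prod.fst) = l :=
      M.eq_lift f l 0 (by rw [h2]; simp [transform]) h3
    refine ⟨by simpa using h1, by simp [h2, transform], ?_⟩
    exact (M.lift_chain f _ 0).1 (by rw [e]; exact h3)⟩
  left_inv l := Subtype.ext (M.lift_fst _ _)
  right_inv l := Subtype.ext (M.eq_lift f l.1 0 (by rw [l.2.2.1]; simp [transform]) l.2.2.2)

end MC

/-- Soundness of the Markov chain reward transformation:
`E(f(Rew M)) = E(Rew' T_f(M))` for monotone `f` with `f(0) = 0`. -/
theorem mc_transform_sound {S : Type*} [Countable S] (M : MC S)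
    (f : ℝ≥0∞ → ℝ≥0∞) (hf : Monotone f) (hf0 : f 0 = 0) :
    M.expRew f = (M.transform f).expRew id := by
  unfold MC.expRew
  congr 1
  funext n
  rw [← (M.pathEquiv f n).tsum_eq]
  congr 1
  funext l
  have h := M.lift_rew f hf l.1 0
  rw [hf0, zero_add, zero_add] at h
  simp only [MC.pathEquiv, Equiv.coe_fn_mk, id]
  rw [M.lift_prob, h]
end

section
/- (Lifting the restriction f(0) = 0.) Let M = (S, Prob, σ₁, rew) be a Markov chain and f : ℝ≥0∞ → ℝ≥0∞ an arbitrary monotone function. Define g(x) = f(x) − f(0) (truncated subtraction), and let M'' be the Markov chain obtained from the transformed chain T_g(M) by adding a new initial state σ₀'' with reward f(0) that transitions with probability 1 to (σ₁, 0), all other transitions and rewards unchanged. Then E(Rew M'') = E(f(Rew M)). -/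
open ENNReal

/-- The chain `M''`: the `g`-transformed chain for `g(x) = f(x) − f(0)`,
with a new initial state (represented by `none`) of reward `f(0)` that moves
with probability 1 to the old initial state `(σ₁, 0)`. -/
noncomputable def MC.liftInit {S : Type*} (M : MC S) (f : ℝ≥0∞ → ℝ≥0∞) :
    MC (Option (S × ℝ≥0∞)) where
  P := fun c => match c with
    | none => PMF.pure (some ((M.transform (fun x => f x - f 0)).init))
    | some sa => ((M.transform (fun x => f x - f 0)).P sa).map some
  init := none
  rew := fun c => match c with
    | none => f 0
    | some sa => (M.transform (fun x => f x - f 0)).rew sa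

namespace MC

variable {S : Type*}

noncomputable def liftPath (M : MC S) : List S → ℝ≥0∞ → List (Option (S × ℝ≥0∞))
  | [], _ => []
  | s :: r, a => some (s, a) :: M.liftPath r (a + M.rew s)

theorem liftPath_length (M : MC S) (l : List S) (a : ℝ≥0∞) :
    (M.liftPath l a).length = l.length := by
  induction l generalizing a with
  | nil => rfl
  | cons s r ih => simp [liftPath, ih]

theorem liftPath_back (M : MC S) (l : List S) (a : ℝ≥0∞) :
    (M.liftPath l a).filterMap (Option.map Prod.fst) = l := by
  induction l generalizing a with
  | nil => rfl
  | cons s r ih => simp [liftPath, ih]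

theorem liftInit_P_some (M : MC S) (f : ℝ≥0∞ → ℝ≥0∞) (s s' : S) (a : ℝ≥0∞) :
    (M.liftInit f).P (some (s, a)) (some (s', a + M.rew s)) = M.P s s' := by
  simp only [liftInit, transform, PMF.map_comp, PMF.map_apply]
  rw [tsum_eq_single s']
  · simp
  · intro b hb
    simp [hb.symm]

theorem liftInit_P_pos (M : MC S) (f : ℝ≥0∞ → ℝ≥0∞) (s : S) (a : ℝ≥0∞)
    (c : Option (S × ℝ≥0∞)) (h : 0 < (M.liftInit f).P (some (s, a)) c) :
    ∃ s', c = some (s', a + M.rew s) := by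
  have h' := (PMF.mem_support_iff _ _).2 h.ne'
  simp only [liftInit, transform, PMF.map_comp, PMF.mem_support_map_iff] at h'
  obtain ⟨s', _, rfl⟩ := h'
  exact ⟨s', rfl⟩

theorem liftInit_P_none (M : MC S) (f : ℝ≥0∞ → ℝ≥0∞) (c : Option (S × ℝ≥0∞)) :
    0 < (M.liftInit f).P none c ↔ c = some (M.init, 0) := by
  simp [liftInit, transform, pos_iff_ne_zero]

theorem liftPath_chain (M : MC S) (f : ℝ≥0∞ → ℝ≥0∞) (l : List S) (a : ℝ≥0∞) :
    (M.liftPath l a).IsChain (fun s s' => 0 < (M.liftInit f).P s s') ↔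
      l.IsChain (fun s s' => 0 < M.P s s') := by
  induction l generalizing a with
  | nil => simp [liftPath]
  | cons s r ih =>
    cases r with
    | nil => simp [liftPath]
    | cons t r =>
      have := ih (a + M.rew s)
      simp only [liftPath] at this ⊢
      rw [List.isChain_cons_cons, List.isChain_cons_cons, this, liftInit_P_some]

theorem liftPath_prob (M : MC S) (f : ℝ≥0∞ → ℝ≥0∞) (l : List S) (a : ℝ≥0∞) :
    (M.liftInit f).pathProb (M.liftPath l a) = M.pathProb l := by
  induction l generalizing a with
  | nil => simp [liftPath, pathProb]
  | cons s r ih =>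
    cases r with
    | nil => simp [liftPath, pathProb]
    | cons t r =>
      have := ih (a + M.rew s)
      simp only [liftPath, pathProb] at this ⊢
      rw [this, liftInit_P_some]

theorem liftPath_rew (M : MC S) (f : ℝ≥0∞ → ℝ≥0∞) (hf : Monotone f) (l : List S) (a : ℝ≥0∞) :
    (f a - f 0) + (M.liftInit f).pathRew (M.liftPath l a) = f (a + M.pathRew l) - f 0 := by
  induction l generalizing a with
  | nil => simp [liftPath, pathRew]
  | cons s r ih =>
    have := ih (a + M.rew s)
    simp only [pathRew, liftPath, List.map_cons, List.sum_cons] at this ⊢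
    rw [← add_assoc a, ← this, ← add_assoc]
    congr 1
    exact add_tsub_cancel_of_le (tsub_le_tsub_right (hf le_self_add) _)

theorem liftPath_surj (M : MC S) (f : ℝ≥0∞ → ℝ≥0∞) (L : List (Option (S × ℝ≥0∞)))
    (s : S) (a : ℝ≥0∞)
    (h : (some (s, a) :: L).IsChain (fun s s' => 0 < (M.liftInit f).P s s')) :
    ∃ r, some (s, a) :: L = M.liftPath (s :: r) a := by
  induction L generalizing s a with
  | nil => exact ⟨[], rfl⟩
  | cons c L ih =>
    rw [List.isChain_cons_cons] at h
    obtain ⟨s', rfl⟩ := M.liftInit_P_pos f s a c h.1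
    obtain ⟨r, hr⟩ := ih _ _ h.2
    exact ⟨s' :: r, by rw [hr]; rfl⟩

theorem lift_isPath (M : MC S) (f : ℝ≥0∞ → ℝ≥0∞) (n : ℕ) (l : List S)
    (h : M.IsPath n l) : (M.liftInit f).IsPath (n + 1) (none :: M.liftPath l 0) := by
  obtain ⟨h1, h2, h3⟩ := h
  cases l with
  | nil => simp at h2
  | cons s r =>
    simp only [List.head?_cons, Option.some.injEq] at h2
    subst h2
    refine ⟨by simp [liftPath_length] at h1 ⊢; exact h1, rfl, ?_⟩
    have := (M.liftPath_chain f _ 0).2 h3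
    simp only [liftPath] at this ⊢
    exact List.isChain_cons_cons.2 ⟨(M.liftInit_P_none f _).2 rfl, this⟩

theorem sum_eq (M : MC S) (f : ℝ≥0∞ → ℝ≥0∞) (hf : Monotone f) (n : ℕ) :
    ∑' l : {l // (M.liftInit f).IsPath (n + 2) l},
      (M.liftInit f).pathProb l.1 * id ((M.liftInit f).pathRew l.1) =
    ∑' l : {l : List S // M.IsPath (n + 1) l}, M.pathProb l.1 * f (M.pathRew l.1) := by
  let φ : {l : List S // M.IsPath (n + 1) l} → {l // (M.liftInit f).IsPath (n + 2) l} :=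
    fun l => ⟨none :: M.liftPath l.1 0, M.lift_isPath f _ _ l.2⟩
  have hφ : Function.Bijective φ := by
    constructor
    · intro l l' h
      have h1 : M.liftPath l.1 0 = M.liftPath l'.1 0 := (List.cons.inj (congrArg Subtype.val h)).2
      apply Subtype.ext
      rw [← M.liftPath_back l.1 0, h1, liftPath_back]
    · rintro ⟨L, h1, h2, h3⟩
      match L, h1, h2, h3 with
      | c :: d :: L, h1, h2, h3 =>
        have hc : c = none := by simpa [liftInit] using h2
        subst hc
        have h4 := List.isChain_cons_cons.1 h3
        have hd := (M.liftInit_P_none f d).1 h4.1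
        subst hd
        obtain ⟨r, hr⟩ := M.liftPath_surj f L _ _ h4.2
        have hl := congrArg List.length hr
        rw [liftPath_length] at hl
        simp only [List.length_cons] at hl h1
        refine ⟨⟨M.init :: r, by simp; omega, rfl, ?_⟩, ?_⟩
        · exact (M.liftPath_chain f _ 0).1 (hr ▸ h4.2)
        · apply Subtype.ext
          simp [φ, hr]
  rw [← (Equiv.ofBijective φ hφ).tsum_eq]
  refine tsum_congr fun l => ?_
  obtain ⟨l, h1, h2, h3⟩ := l
  simp only [Equiv.ofBijective_apply, φ, id]
  cases l with
  | nil => simp at h2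
  | cons s r =>
    simp only [List.head?_cons, Option.some.injEq] at h2
    subst h2
    have hp := M.liftPath_prob f (M.init :: r) 0
    have hr := M.liftPath_rew f hf (M.init :: r) 0
    have hP : (M.liftInit f).P none (some (M.init, 0)) = 1 := by simp [liftInit, transform]
    have hR : (M.liftInit f).pathRew (none :: M.liftPath (M.init :: r) 0) =
        f 0 + (M.liftInit f).pathRew (M.liftPath (M.init :: r) 0) := by
      simp [pathRew, liftInit]
    rw [hR]
    rw [tsub_self, zero_add, zero_add] at hr
    rw [hr, add_tsub_cancel_of_le (hf zero_le), ← hp]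
    simp only [liftPath, pathProb, hP, one_mul]

theorem sum_zero (M : MC S) (g : ℝ≥0∞ → ℝ≥0∞) :
    ∑' l : {l : List S // M.IsPath 0 l}, M.pathProb l.1 * g (M.pathRew l.1) = 0 := by
  have : IsEmpty {l : List S // M.IsPath 0 l} := ⟨by
    rintro ⟨l, h1, h2, _⟩
    rw [List.length_eq_zero_iff.1 h1] at h2
    simp at h2⟩
  exact tsum_empty

theorem sum_one (M : MC S) (g : ℝ≥0∞ → ℝ≥0∞) :
    ∑' l : {l : List S // M.IsPath 1 l}, M.pathProb l.1 * g (M.pathRew l.1) = g (M.rew M.init) := by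
  have hp : M.IsPath 1 [M.init] := ⟨rfl, rfl, List.isChain_singleton _⟩
  rw [tsum_eq_single ⟨[M.init], hp⟩]
  · simp [pathProb, pathRew]
  · rintro ⟨l, h1, h2, h3⟩ h
    obtain ⟨s, rfl⟩ := List.length_eq_one_iff.1 h1
    simp only [List.head?_cons, Option.some.injEq] at h2
    subst h2
    exact absurd rfl h

end MC

/-- Lifting the restriction `f(0) = 0`: for an arbitrary
monotone `f`, the chain `M''` obtained from `T_{f−f(0)}(M)` by prepending an
initial state with reward `f(0)` satisfies `E(Rew M'') = E(f(Rew M))`. -/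
theorem mc_transform_sound_lifted {S : Type*} [Countable S] (M : MC S)
    (f : ℝ≥0∞ → ℝ≥0∞) (hf : Monotone f) :
    (M.liftInit f).expRew id = M.expRew f := by
  apply le_antisymm
  · refine iSup_le fun n => ?_
    match n with
    | 0 => rw [MC.sum_zero]; exact zero_le
    | 1 =>
      rw [MC.sum_one]
      refine le_trans ?_ (le_iSup _ 1)
      rw [MC.sum_one]
      exact hf zero_le
    | n + 2 =>
      rw [MC.sum_eq M f hf]
      exact le_iSup (fun n : ℕ => ∑' l : {l : List S // M.IsPath n l},
        M.pathProb l.1 * f (M.pathRew l.1)) (n + 1)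
  · refine iSup_le fun n => ?_
    match n with
    | 0 => rw [MC.sum_zero]; exact zero_le
    | n + 1 =>
      rw [← MC.sum_eq M f hf]
      exact le_iSup (fun n : ℕ => ∑' l : {l // (M.liftInit f).IsPath n l},
        (M.liftInit f).pathProb l.1 * id ((M.liftInit f).pathRew l.1)) (n + 2)
end

section
/- (Soundness of the multi-reward Markov chain transformation.) Fix n ≥ 1 and let M = (S, Prob, σ₁, rew) be a Markov chain with tuple-valued rewards rew : S → (ℝ≥0∞)ⁿ, and let f : (ℝ≥0∞)ⁿ → ℝ≥0∞ be monotone with respect to the componentwise order with f(0,…,0) = 0. Then E(f(Rew M)) = E(Rew' T_f(M)), where T_f(M) has state space S × (ℝ≥0∞)ⁿ, initial state (σ₁, (0,…,0)), transitions Prob'((σ,τ⃗))((σ',τ⃗')) = Prob(σ)(σ') if τ⃗' = τ⃗ + rew(σ) (componentwise) and 0 otherwise, and reward rew'((σ,τ⃗)) = f(τ⃗ + rew(σ)) − f(τ⃗) (truncated subtraction). -/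
open ENNReal

/-- A Markov chain with `n`-tuple-valued rewards. -/
structure MCn (S : Type*) (n : ℕ) where
  P : S → PMF S
  init : S
  rew : S → (Fin n → ℝ≥0∞)

namespace MCn

variable {S : Type*} {n : ℕ}

/-- `l` is a path of length `k` of the multi-reward chain `M`. -/
def IsPath (M : MCn S n) (k : ℕ) (l : List S) : Prop :=
  l.length = k ∧ l.head? = some M.init ∧ l.Chain' (fun s s' => 0 < M.P s s')

/-- The probability of a path. -/
noncomputable def pathProb (M : MCn S n) : List S → ℝ≥0∞
  | [] => 1
  | [_] => 1
  | s :: s' :: r => M.P s s' * M.pathProb (s' :: r)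

/-- The cumulative tuple-valued reward of a path (componentwise sum). -/
noncomputable def pathRew (M : MCn S n) (l : List S) : Fin n → ℝ≥0∞ :=
  (l.map M.rew).sum

/-- The expected `f`-transformed cumulative reward of the multi-reward chain:
`E(f(Rew M)) = sup_k Σ_{π ∈ Paths^{=k}(M)} Prob(π) · f(Rew(π))`. -/
noncomputable def expRew (M : MCn S n) (f : (Fin n → ℝ≥0∞) → ℝ≥0∞) : ℝ≥0∞ :=
  ⨆ k : ℕ, ∑' l : {l : List S // M.IsPath k l}, M.pathProb l.1 * f (M.pathRew l.1)

/-- The multi-reward transformation `T_f(M)`: a scalar-reward chain over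
`S × (ℝ≥0∞)ⁿ` tracking the accumulated tuple of rewards, whose rewards are
the incremental differences `f(τ⃗ + rew(σ)) − f(τ⃗)`. -/
noncomputable def transform (M : MCn S n) (f : (Fin n → ℝ≥0∞) → ℝ≥0∞) :
    MC (S × (Fin n → ℝ≥0∞)) where
  P := fun c => (M.P c.1).map (fun s' => (s', c.2 + M.rew c.1))
  init := (M.init, 0)
  rew := fun c => f (c.2 + M.rew c.1) - f c.2

end MCn

namespace MCn

def liftP {S : Type*} {n : ℕ} (M : MCn S n) :
    (Fin n → ℝ≥0∞) → List S → List (S × (Fin n → ℝ≥0∞))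
  | _, [] => []
  | t, s :: r => (s, t) :: liftP M (t + M.rew s) r

theorem liftP_map_fst {S : Type*} {n : ℕ} (M : MCn S n) (l : List S) :
    ∀ t, (M.liftP t l).map Prod.fst = l := by
  induction l with
  | nil => intro t; rfl
  | cons s r ih => intro t; simp [liftP, ih]

theorem transform_P_apply {S : Type*} {n : ℕ} (M : MCn S n) (f : (Fin n → ℝ≥0∞) → ℝ≥0∞)
    (s s' : S) (t t' : Fin n → ℝ≥0∞) (h : t' = t + M.rew s) :
    (M.transform f).P (s, t) (s', t') = M.P s s' := by
  subst h
  simp only [transform, PMF.map_apply, Prod.mk.injEq, and_true]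
  rw [tsum_eq_single s']
  · simp
  · intro b hb
    simp [hb.symm]

theorem transform_P_pos {S : Type*} {n : ℕ} (M : MCn S n) (f : (Fin n → ℝ≥0∞) → ℝ≥0∞)
    (s s' : S) (t t' : Fin n → ℝ≥0∞) (h : 0 < (M.transform f).P (s, t) (s', t')) :
    t' = t + M.rew s := by
  by_contra hne
  apply h.ne'
  simp [transform, PMF.map_apply, hne]

theorem liftP_prob {S : Type*} {n : ℕ} (M : MCn S n) (f : (Fin n → ℝ≥0∞) → ℝ≥0∞)
    (l : List S) : ∀ t, (M.transform f).pathProb (M.liftP t l) = M.pathProb l := by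
  induction l with
  | nil => intro t; rfl
  | cons s r ih =>
    intro t
    cases r with
    | nil => rfl
    | cons s' r =>
      have := ih (t + M.rew s)
      simp only [liftP] at this ⊢
      simp only [MC.pathProb, pathProb, this]
      rw [transform_P_apply M f s s' t _ rfl]

theorem liftP_rew {S : Type*} {n : ℕ} (M : MCn S n) (f : (Fin n → ℝ≥0∞) → ℝ≥0∞)
    (hf : Monotone f) (l : List S) :
    ∀ t, (M.transform f).pathRew (M.liftP t l) + f t = f (t + M.pathRew l) := by
  induction l with
  | nil => intro t; simp [liftP, MC.pathRew, pathRew]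
  | cons s r ih =>
    intro t
    have := ih (t + M.rew s)
    simp only [liftP, MC.pathRew, pathRew, List.map_cons, List.sum_cons] at this ⊢
    rw [← add_assoc t, ← this, add_comm (MC.rew _ _), add_assoc]
    congr 1
    exact tsub_add_cancel_of_le (hf le_self_add)

theorem liftP_chain {S : Type*} {n : ℕ} (M : MCn S n) (f : (Fin n → ℝ≥0∞) → ℝ≥0∞)
    (l : List S) : ∀ t, l.IsChain (fun s s' => 0 < M.P s s') →
      (M.liftP t l).IsChain (fun s s' => 0 < (M.transform f).P s s') := by
  induction l with
  | nil => intro t _; simp [liftP]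
  | cons s r ih =>
    intro t h
    cases r with
    | nil => simp [liftP]
    | cons s' r =>
      rw [List.isChain_cons_cons] at h
      have := ih (t + M.rew s) h.2
      simp only [liftP] at this ⊢
      rw [List.isChain_cons_cons]
      refine ⟨?_, this⟩
      rw [transform_P_apply M f s s' t _ rfl]
      exact h.1

theorem chain_liftP {S : Type*} {n : ℕ} (M : MCn S n) (f : (Fin n → ℝ≥0∞) → ℝ≥0∞)
    (l : List (S × (Fin n → ℝ≥0∞))) : ∀ s t, l.head? = some (s, t) →
      l.IsChain (fun s s' => 0 < (M.transform f).P s s') →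
      M.liftP t (l.map Prod.fst) = l ∧
        (l.map Prod.fst).IsChain (fun s s' => 0 < M.P s s') := by
  induction l with
  | nil => intro s t h; simp at h
  | cons a r ih =>
    intro s t h hc
    simp only [List.head?_cons, Option.some.injEq] at h
    subst h
    cases r with
    | nil => simp [liftP]
    | cons b r =>
      obtain ⟨s', t'⟩ := b
      rw [List.isChain_cons_cons] at hc
      have ht := transform_P_pos M f s s' t t' hc.1
      have hp := hc.1
      rw [transform_P_apply M f s s' t t' ht] at hp
      obtain ⟨h1, h2⟩ := ih s' t' rfl hc.2
      constructor
      · rw [List.map_cons, liftP, ← ht, h1]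
      · simp only [List.map_cons] at h2 ⊢
        rw [List.isChain_cons_cons]
        exact ⟨hp, h2⟩

def pathEquiv {S : Type*} {n : ℕ} (M : MCn S n) (f : (Fin n → ℝ≥0∞) → ℝ≥0∞) (k : ℕ) :
    {l : List S // M.IsPath k l} ≃
      {l : List (S × (Fin n → ℝ≥0∞)) // (M.transform f).IsPath k l} where
  toFun l := ⟨M.liftP 0 l.1, by
    obtain ⟨l, h1, h2, h3⟩ := l
    refine ⟨?_, ?_, liftP_chain M f l 0 h3⟩
    · have h := congrArg List.length (liftP_map_fst M l 0)
      rw [List.length_map] at h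
      exact h.trans h1
    · cases l with
      | nil => simp at h2
      | cons s r => simp at h2; subst h2; rfl⟩
  invFun l := ⟨l.1.map Prod.fst, by
    obtain ⟨l, h1, h2, h3⟩ := l
    refine ⟨by simpa using h1, ?_, (chain_liftP M f l _ _ h2 h3).2⟩
    rw [List.head?_map, h2]; rfl⟩
  left_inv l := Subtype.ext (liftP_map_fst M l.1 0)
  right_inv l := Subtype.ext (chain_liftP M f l.1 _ _ l.2.2.1 l.2.2.2).1

end MCn

/-- Soundness of the multi-reward Markov chain transformation:
for `n ≥ 1` and `f : (ℝ≥0∞)ⁿ → ℝ≥0∞` monotone (componentwise order) with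
`f(0,…,0) = 0`, we have `E(f(Rew M)) = E(Rew' T_f(M))`. -/
theorem mcn_transform_sound {S : Type*} [Countable S] {n : ℕ} (hn : 1 ≤ n)
    (M : MCn S n) (f : (Fin n → ℝ≥0∞) → ℝ≥0∞) (hf : Monotone f) (hf0 : f 0 = 0) :
    M.expRew f = (M.transform f).expRew id := by
  unfold MCn.expRew MC.expRew
  congr 1
  funext k
  rw [← (MCn.pathEquiv M f k).tsum_eq]
  congr 1
  funext l
  have h := MCn.liftP_rew M f hf l.1 0
  rw [hf0, add_zero, zero_add] at h
  simp only [MCn.pathEquiv, Equiv.coe_fn_mk, id, MCn.liftP_prob, h]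
end

section
/- (Second-moment fixed point of the web-server loop.) The least function Y : ℝ≥0 → ℝ≥0∞ (with respect to the pointwise order) satisfying Y(τ) = (2·τ + 1) + (1/2)·Y(τ + 1) for all τ ∈ ℝ≥0 is Y(τ) = 4·τ + 6. -/
open ENNReal

lemma ws_half (τ : NNReal) :
    (4 * (τ : ℝ≥0∞) + 6) = (2 * τ + 1) + (1/2) * (4 * ((τ + 1 : NNReal) : ℝ≥0∞) + 6) := by
  have h : (4 * τ + 6 : NNReal) = (2 * τ + 1) + (1/2) * (4 * (τ + 1) + 6) := by
    apply NNReal.eq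
    push_cast
    ring
  have h2 : ((1/2 : NNReal) : ℝ≥0∞) = 1/2 := by
    rw [ENNReal.coe_div (by norm_num)]; simp
  rw [← h2]
  exact_mod_cast congrArg (fun x : NNReal => (x : ℝ≥0∞)) h

lemma ws_bound (Y : NNReal → ℝ≥0∞)
    (hY : ∀ τ : NNReal, Y τ = (2 * τ + 1) + (1/2) * Y (τ + 1)) (n : ℕ) :
    ∀ τ : NNReal, 4 * (τ : ℝ≥0∞) + 6 ≤
      Y τ + (1/2) ^ n * (4 * ((τ + n : NNReal) : ℝ≥0∞) + 6) := by
  induction n with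
  | zero => intro τ; simp
  | succ n ih =>
    intro τ
    rw [ws_half, hY τ]
    have e : τ + ((n + 1 : ℕ) : NNReal) = τ + 1 + n := by push_cast; ring
    rw [e]
    calc _ ≤ (2 * (τ : ℝ≥0∞) + 1) + (1/2) * (Y (τ + 1) + (1/2) ^ n *
          (4 * ((τ + 1 + n : NNReal) : ℝ≥0∞) + 6)) := by
          exact add_le_add le_rfl (mul_le_mul_right (ih (τ + 1)) _)
      _ = _ := by rw [pow_succ]; ring

lemma ws_lim (τ : NNReal) : Filter.Tendsto
    (fun n : ℕ => ((1/2 : ℝ≥0∞)) ^ n * (4 * ((τ + n : NNReal) : ℝ≥0∞) + 6))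
    Filter.atTop (nhds 0) := by
  have h2 : ((1/2 : NNReal) : ℝ≥0∞) = 1/2 := by
    rw [ENNReal.coe_div (by norm_num)]; simp
  have h : Filter.Tendsto (fun n : ℕ => ((1/2 : NNReal)) ^ n * (4 * (τ + n) + 6))
      Filter.atTop (nhds 0) := by
    rw [← NNReal.tendsto_coe]
    push_cast
    have a := tendsto_self_mul_const_pow_of_lt_one (r := (1/2 : ℝ)) (by norm_num) (by norm_num)
    have b := tendsto_pow_atTop_nhds_zero_of_lt_one (r := (1/2 : ℝ)) (by norm_num) (by norm_num)
    have c := (a.const_mul 4).add (b.const_mul (4 * (τ : ℝ) + 6))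
    simp only [mul_zero, add_zero] at c
    refine c.congr fun n => ?_
    ring
  have := ENNReal.tendsto_coe.2 h
  rw [← h2]
  rw [ENNReal.coe_zero] at this
  refine this.congr fun n => ?_
  push_cast
  rfl

/-- Second-moment fixed point of the web-server loop: the least
function `Y : ℝ≥0 → ℝ≥0∞` (pointwise order) satisfying
`Y(τ) = (2·τ + 1) + (1/2)·Y(τ + 1)` for all `τ` is `Y(τ) = 4·τ + 6`. -/
theorem webserver_second_moment_lfp :
    IsLeast {Y : NNReal → ℝ≥0∞ | ∀ τ : NNReal, Y τ = (2 * τ + 1) + (1/2) * Y (τ + 1)}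
      (fun τ : NNReal => 4 * τ + 6) := by
  refine ⟨fun τ => ws_half τ, fun Y hY τ => ?_⟩
  have h := (tendsto_const_nhds (x := Y τ)).add (ws_lim τ)
  rw [add_zero] at h
  exact ge_of_tendsto' h fun n => ws_bound Y hY n τ
end

section
/- (Closed form for the Kleene iterates of the second-moment functional.) Let Φ be the monotone map on functions ℝ≥0 → ℝ≥0∞ defined by Φ(Y)(τ) = (2·τ + 1) + (1/2)·Y(τ + 1), and let Φⁿ(0) denote its n-fold iterate starting from the constant-zero function. Then for every n ≥ 1 and every τ ∈ ℝ≥0, Φⁿ(0)(τ) = 2^{1−n}·((2^{n+1} − 2)·τ + 3·(2ⁿ − 1) − 2·n); consequently sup_{n∈ℕ} Φⁿ(0)(τ) = 4·τ + 6. -/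
open ENNReal

lemma aux_nat (n : ℕ) : (n : ℝ) + 1 ≤ 2 ^ n := by
  exact_mod_cast Nat.lt_two_pow_self (n := n)

lemma aux_nonneg (n : ℕ) (t : ℝ) (ht : 0 ≤ t) :
    0 ≤ 4 * t * (1 - (1/2) ^ n) + 6 - (6 + 4 * n) * (1/2 : ℝ) ^ n := by
  have h := aux_nat n
  have e : (2 : ℝ) ^ n * (1/2) ^ n = 1 := by rw [← mul_pow]; norm_num
  have hp : (0 : ℝ) < (1/2) ^ n := by positivity
  have h1 : (1/2 : ℝ) ^ n ≤ 1 := pow_le_one₀ (by norm_num) (by norm_num)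
  have h2 : ((n : ℝ) + 1) * (1/2) ^ n ≤ 1 := by
    exact (mul_le_mul_of_nonneg_right h hp.le).trans_eq e
  have h3 : 0 ≤ t * (1 - (1/2) ^ n) := mul_nonneg ht (by linarith)
  nlinarith

lemma aux_iter (Φ : (NNReal → ℝ≥0∞) → (NNReal → ℝ≥0∞))
    (hΦ : ∀ Y (τ : NNReal), Φ Y τ = (2 * τ + 1) + (1/2) * Y (τ + 1)) (n : ℕ) :
    ∀ τ : NNReal, Φ^[n] 0 τ =
      ENNReal.ofReal (4 * τ * (1 - (1/2) ^ n) + 6 - (6 + 4 * n) * (1/2 : ℝ) ^ n) := by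
  induction n with
  | zero => intro τ; simp
  | succ n ih =>
    intro τ
    rw [Function.iterate_succ_apply', hΦ, ih]
    have a1 : (2 * τ + 1 : ℝ≥0∞) = ENNReal.ofReal (2 * τ + 1) := by
      rw [ENNReal.ofReal_add (by positivity) (by norm_num), ENNReal.ofReal_mul (by norm_num)]
      simp
    have a2 : (1 / 2 : ℝ≥0∞) = ENNReal.ofReal (1/2) := by
      rw [ENNReal.ofReal_div_of_pos (by norm_num)]; simp
    have a3 := aux_nonneg n ((τ + 1 : NNReal) : ℝ) (NNReal.coe_nonneg _)
    rw [a1, a2, ← ENNReal.ofReal_mul (by norm_num),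
      ← ENNReal.ofReal_add (by positivity) (mul_nonneg (by norm_num) a3)]
    congr 1
    push_cast
    ring

/-- Closed form for the Kleene iterates of the second-moment
functional `Φ(Y)(τ) = (2τ+1) + (1/2)·Y(τ+1)`: for `n ≥ 1`,
`Φⁿ(0)(τ) = 2^{1−n}·((2^{n+1} − 2)·τ + 3·(2ⁿ − 1) − 2·n)`, and consequently
`sup_n Φⁿ(0)(τ) = 4τ + 6`. -/
theorem webserver_second_moment_iterates
    (Φ : (NNReal → ℝ≥0∞) → (NNReal → ℝ≥0∞))
    (hΦ : ∀ Y (τ : NNReal), Φ Y τ = (2 * τ + 1) + (1/2) * Y (τ + 1)) :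
    (∀ n : ℕ, 1 ≤ n → ∀ τ : NNReal,
      Φ^[n] 0 τ = (2 : ℝ≥0∞) ^ ((1 : ℤ) - (n : ℤ)) *
        (((2 : ℝ≥0∞) ^ (n + 1) - 2) * τ + 3 * ((2 : ℝ≥0∞) ^ n - 1) - 2 * n)) ∧
    (∀ τ : NNReal, (⨆ n : ℕ, Φ^[n] 0 τ) = 4 * τ + 6) := by
  have key := aux_iter Φ hΦ
  refine ⟨fun n hn τ => ?_, fun τ => ?_⟩
  · rw [key]
    have hn2 := aux_nat n
    have hn1 : (1 : ℝ) ≤ n := by exact_mod_cast hn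
    have e2 : (2 : ℝ≥0∞) = ENNReal.ofReal 2 := by simp
    have e3 : (3 : ℝ≥0∞) = ENNReal.ofReal 3 := by simp
    have e1 : (1 : ℝ≥0∞) = ENNReal.ofReal 1 := by simp
    have et : (τ : ℝ≥0∞) = ENNReal.ofReal τ := by simp
    have en : (n : ℝ≥0∞) = ENNReal.ofReal n := by simp
    have b0 : (2 : ℝ≥0∞) ^ ((1 : ℤ) - (n : ℤ)) = ENNReal.ofReal (2 * (1/2) ^ n) := by
      rw [ENNReal.zpow_sub (by norm_num) (by norm_num), zpow_one, zpow_natCast,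
        ENNReal.ofReal_mul (by norm_num), ENNReal.ofReal_pow (by norm_num),
        ENNReal.ofReal_div_of_pos (by norm_num)]
      simp [ENNReal.inv_pow]
    have b1 : (2 : ℝ≥0∞) ^ (n + 1) - 2 = ENNReal.ofReal (2 ^ (n + 1) - 2) := by
      rw [ENNReal.ofReal_sub _ (by norm_num), ENNReal.ofReal_pow (by norm_num)]; simp
    have b2 : (2 : ℝ≥0∞) ^ n - 1 = ENNReal.ofReal (2 ^ n - 1) := by
      rw [ENNReal.ofReal_sub _ (by norm_num), ENNReal.ofReal_pow (by norm_num)]; simp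
    have b3 : (2 : ℝ≥0∞) * n = ENNReal.ofReal (2 * n) := by
      rw [ENNReal.ofReal_mul (by norm_num)]; simp
    have c1 : (0 : ℝ) ≤ 2 ^ (n + 1) - 2 := by rw [pow_succ]; linarith
    have c2 : (0 : ℝ) ≤ 2 ^ n - 1 := by linarith
    rw [b0, b1, b2, b3, et, e3, ← ENNReal.ofReal_mul c1, ← ENNReal.ofReal_mul (by norm_num),
      ← ENNReal.ofReal_add (mul_nonneg c1 (NNReal.coe_nonneg τ)) (by linarith),
      ← ENNReal.ofReal_sub _ (by positivity), ← ENNReal.ofReal_mul (by positivity)]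
    congr 1
    have e : (1/2 : ℝ) ^ n * 2 ^ n = 1 := by rw [← mul_pow]; norm_num
    rw [pow_succ]
    linear_combination (-4 * (τ : ℝ) - 6) * e
  · have et : (4 * τ + 6 : ℝ≥0∞) = ENNReal.ofReal (4 * τ + 6) := by
      rw [ENNReal.ofReal_add (by positivity) (by norm_num), ENNReal.ofReal_mul (by norm_num)]
      simp
    rw [et]
    apply le_antisymm
    · refine iSup_le fun n => ?_
      rw [key]
      apply ENNReal.ofReal_le_ofReal
      have h1 : 0 ≤ (τ : ℝ) * (1/2) ^ n := by positivity
      have h2 : 0 ≤ (6 + 4 * (n : ℝ)) * (1/2) ^ n := by positivity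
      linarith
    · have t1 : Filter.Tendsto (fun n : ℕ => (1/2 : ℝ) ^ n) Filter.atTop (nhds 0) :=
        tendsto_pow_atTop_nhds_zero_of_lt_one (by norm_num) (by norm_num)
      have t2 : Filter.Tendsto (fun n : ℕ => (n : ℝ) * (1/2 : ℝ) ^ n) Filter.atTop (nhds 0) :=
        tendsto_self_mul_const_pow_of_lt_one (by norm_num) (by norm_num)
      have t3 : Filter.Tendsto (fun n : ℕ => 4 * (τ : ℝ) * (1 - (1/2) ^ n) + 6
          - (6 + 4 * n) * (1/2 : ℝ) ^ n) Filter.atTop (nhds (4 * τ + 6)) := by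
        have := ((tendsto_const_nhds (x := 4 * (τ : ℝ) + 6)).sub
          (t1.const_mul (4 * (τ : ℝ) + 6))).sub (t2.const_mul 4)
        simp only [mul_zero, sub_zero] at this
        refine this.congr fun n => ?_
        ring
      refine le_of_tendsto' (ENNReal.tendsto_ofReal t3) fun n => ?_
      rw [← key]
      exact le_iSup (fun n => Φ^[n] 0 τ) n
end

section
/- (Expected excess over a budget.) Let p ∈ (0,1) and N ∈ ℕ. The least function Y : ℕ → ℝ≥0∞ (with respect to the pointwise order) satisfying Y(n) = [n ≥ N] + (1 − p)·Y(n + 1) for all n ∈ ℕ is Y(n) = (1 − p)^{N ∸ n} / p, where [·] is the indicator (value 1 if the condition holds, else 0) and ∸ is truncated subtraction on ℕ; in particular Y(0) = (1 − p)^N / p. -/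
open ENNReal

/-- Expected excess over a budget: for `p ∈ (0,1)` and `N ∈ ℕ`,
the least function `Y : ℕ → ℝ≥0∞` (pointwise order) satisfying
`Y(n) = [n ≥ N] + (1 − p)·Y(n + 1)` is `Y(n) = (1 − p)^{N ∸ n} / p`. -/
theorem expected_excess_lfp (p : ℝ≥0∞) (hp0 : 0 < p) (hp1 : p < 1) (N : ℕ) :
    IsLeast {Y : ℕ → ℝ≥0∞ |
        ∀ n : ℕ, Y n = (if N ≤ n then 1 else 0) + (1 - p) * Y (n + 1)}
      (fun n : ℕ => (1 - p) ^ (N - n) / p) := by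
  have hpt : p ≠ ⊤ := (hp1.trans ENNReal.one_lt_top).ne
  constructor
  · intro n
    by_cases h : N ≤ n
    · have h1 : N - n = 0 := by omega
      have h2 : N - (n + 1) = 0 := by omega
      simp only [h, h1, h2, if_true, pow_zero]
      rw [← mul_div_assoc, mul_one]
      nth_rewrite 2 [← ENNReal.div_self hp0.ne' hpt]
      rw [← ENNReal.add_div, add_tsub_cancel_of_le hp1.le]
    · have h1 : N - n = (N - (n + 1)) + 1 := by omega
      simp only [h, if_false, zero_add]
      rw [h1, pow_succ', mul_div_assoc]
  · intro Y hY
    have hY' : ∀ n : ℕ, Y n = (if N ≤ n then 1 else 0) + (1 - p) * Y (n + 1) := hY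
    have key : ∀ k n : ℕ, N ≤ n → ∑ i ∈ Finset.range k, (1 - p) ^ i ≤ Y n := by
      intro k
      induction k with
      | zero => intro n _; simp
      | succ k ih =>
        intro n hn
        rw [hY' n, if_pos hn, Finset.sum_range_succ', pow_zero, add_comm]
        simp only [pow_succ']
        rw [← Finset.mul_sum]
        gcongr
        exact ih (n + 1) (by omega)
    have key2 : ∀ n : ℕ, N ≤ n → p⁻¹ ≤ Y n := by
      intro n hn
      have h := ENNReal.tsum_geometric (1 - p)
      rw [ENNReal.sub_sub_cancel ENNReal.one_ne_top hp1.le] at h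
      rw [← h, ENNReal.tsum_eq_iSup_nat]
      exact iSup_le fun k => key k n hn
    have key3 : ∀ d n : ℕ, N - n = d → (1 - p) ^ d / p ≤ Y n := by
      intro d
      induction d with
      | zero =>
        intro n hn
        simpa using key2 n (by omega)
      | succ d ih =>
        intro n hn
        rw [hY' n, if_neg (by omega), zero_add, pow_succ', mul_div_assoc]
        gcongr
        exact ih (n + 1) (by omega)
    intro n
    exact key3 _ n rfl
end

section
/- (CDF of the web-server runtime.) Let N ∈ ℕ with N ≥ 1. The least function Y : ℕ → ℝ≥0∞ (with respect to the pointwise order) satisfying Y(n) = [n + 1 = N] + (1/2)·Y(n + 1) for all n ∈ ℕ is Y(n) = [n + 1 ≤ N]·(1/2)^{N − (n+1)}; in particular Y(0) = (1/2)^{N − 1}, the probability that the web-server loop's runtime is at least N. -/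
open ENNReal

/-- CDF of the web-server runtime: for `N ≥ 1`, the least
function `Y : ℕ → ℝ≥0∞` (pointwise order) satisfying
`Y(n) = [n + 1 = N] + (1/2)·Y(n + 1)` is
`Y(n) = [n + 1 ≤ N]·(1/2)^{N − (n+1)}`; in particular `Y(0) = (1/2)^{N−1}`. -/
theorem webserver_cdf_lfp (N : ℕ) (hN : 1 ≤ N) :
    IsLeast {Y : ℕ → ℝ≥0∞ |
        ∀ n : ℕ, Y n = (if n + 1 = N then 1 else 0) + (1/2) * Y (n + 1)}
      (fun n : ℕ => (if n + 1 ≤ N then 1 else 0) * (1/2) ^ (N - (n + 1))) := by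
  constructor
  · intro n
    rcases lt_trichotomy (n + 1) N with h | h | h
    · have e : N - (n + 1) = (N - (n + 1 + 1)) + 1 := by omega
      have h1 : n + 1 ≤ N := by omega
      have h2 : n + 1 + 1 ≤ N := by omega
      have h3 : n + 1 ≠ N := by omega
      simp only [h1, h2, h3, if_true, if_false, one_mul, zero_add]
      rw [e, pow_succ, mul_comm]
    · subst h
      simp
    · have h1 : ¬ n + 1 ≤ N := by omega
      have h2 : ¬ n + 1 + 1 ≤ N := by omega
      have h3 : n + 1 ≠ N := by omega
      simp only [h1, h2, h3, if_false, zero_mul, mul_zero, zero_add]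
  · intro Y hY
    have key : ∀ k n : ℕ, n + 1 + k = N → ((1/2 : ℝ≥0∞)) ^ k ≤ Y n := by
      intro k
      induction k with
      | zero =>
        intro n h
        have h3 : n + 1 = N := by omega
        rw [hY n, if_pos h3, pow_zero]
        exact le_self_add
      | succ k ih =>
        intro n h
        rw [hY n, pow_succ, mul_comm]
        exact le_trans (mul_le_mul_right (ih (n + 1) (by omega)) _) le_add_self
    intro n
    by_cases h : n + 1 ≤ N
    · simp only [h, if_true, one_mul]
      exact key _ n (by omega)
    · simp only [h, if_false, zero_mul]
      exact zero_le
end
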